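/- arXiv:2310.11611 — 3 statements merged into one kernel-verified Lean document; each statement's English description precedes it below -/
import Mathlib

section
/- Let X_1,…,X_n, Y_1,…,Y_n be mutually independent real random variables with E[X_i] = E[Y_i] = 0 and E[X_i²] = E[Y_i²] = σ_i² < ∞ for each i, and let n ≥ 2 and 1 ≤ m ≤ n. Then the expectation over the data of the pruning-estimator variance satisfies E[(n/m − 1)·∑_{i=1}ⁿ X_i² Y_i² + ((m−n)/(m(n−1)))·∑_{i≠j} X_i Y_i X_j Y_j] = ((n−m)/m)·∑_{i=1}ⁿ σ_i⁴. -/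
open Finset MeasureTheory ProbabilityTheory

/-- Expected (over mean-zero independent data `X_1,…,X_n,Y_1,…,Y_n` with
`E[X_i] = E[Y_i] = 0`, `E[X_i²] = E[Y_i²] = σ_i² < ∞`) variance of the pruning
inner-product estimator:
`E[(n/m − 1)·∑ X_i² Y_i² + ((m−n)/(m(n−1)))·∑_{i≠j} X_i Y_i X_j Y_j] = ((n−m)/m)·∑ σ_i⁴`. -/
theorem expected_pruning_variance {Ω : Type*} [MeasurableSpace Ω] (P : Measure Ω)
    [IsProbabilityMeasure P] (n m : ℕ) (hn : 2 ≤ n) (hm1 : 1 ≤ m) (hmn : m ≤ n)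
    (X Y : Fin n → Ω → ℝ) (σ : Fin n → ℝ)
    (hindep : iIndepFun (m := fun _ : Fin n ⊕ Fin n => (inferInstance : MeasurableSpace ℝ))
      (Sum.elim X Y) P)
    (hXint : ∀ i, Integrable (X i) P) (hYint : ∀ i, Integrable (Y i) P)
    (hX2int : ∀ i, Integrable (fun ω => (X i ω) ^ 2) P)
    (hY2int : ∀ i, Integrable (fun ω => (Y i ω) ^ 2) P)
    (hXmean : ∀ i, ∫ ω, X i ω ∂P = 0) (hYmean : ∀ i, ∫ ω, Y i ω ∂P = 0)
    (hXvar : ∀ i, ∫ ω, (X i ω) ^ 2 ∂P = (σ i) ^ 2)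
    (hYvar : ∀ i, ∫ ω, (Y i ω) ^ 2 ∂P = (σ i) ^ 2) :
    ∫ ω, (((n : ℝ) / (m : ℝ) - 1) * ∑ i, (X i ω) ^ 2 * (Y i ω) ^ 2
        + (((m : ℝ) - (n : ℝ)) / ((m : ℝ) * ((n : ℝ) - 1))) *
            ∑ i, ∑ j ∈ Finset.univ \ {i}, X i ω * Y i ω * (X j ω * Y j ω)) ∂P
      = (((n : ℝ) - (m : ℝ)) / (m : ℝ)) * ∑ i, (σ i) ^ 4 := by
  have hXY : ∀ i, IndepFun (X i) (Y i) P := fun i =>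
    hindep.indepFun (i := Sum.inl i) (j := Sum.inr i) (by simp)
  have hsq : Measurable (fun x : ℝ => x ^ 2) := by fun_prop
  have hXY2 : ∀ i, IndepFun (fun ω => X i ω ^ 2) (fun ω => Y i ω ^ 2) P := fun i =>
    (hXY i).comp hsq hsq
  have hI2 : ∀ i, Integrable (fun ω => X i ω ^ 2 * Y i ω ^ 2) P := fun i =>
    (hXY2 i).integrable_mul (hX2int i) (hY2int i)
  have hE2 : ∀ i, ∫ ω, X i ω ^ 2 * Y i ω ^ 2 ∂P = σ i ^ 4 := fun i => by
    rw [(hXY2 i).integral_fun_mul_eq_mul_integral (hX2int i).aestronglyMeasurable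
      (hY2int i).aestronglyMeasurable, hXvar, hYvar]
    ring
  have hI1 : ∀ i, Integrable (fun ω => X i ω * Y i ω) P := fun i =>
    (hXY i).integrable_mul (hXint i) (hYint i)
  have hE1 : ∀ i, ∫ ω, X i ω * Y i ω ∂P = 0 := fun i => by
    rw [(hXY i).integral_fun_mul_eq_mul_integral (hXint i).aestronglyMeasurable
      (hYint i).aestronglyMeasurable, hXmean, zero_mul]
  have hmeas : ∀ k, AEMeasurable (Sum.elim X Y k) P := by
    rintro (k | k)
    · exact (hXint k).aemeasurable
    · exact (hYint k).aemeasurable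
  have hC : ∀ i j, i ≠ j →
      IndepFun (fun ω => X i ω * Y i ω) (fun ω => X j ω * Y j ω) P := fun i j hij =>
    hindep.indepFun_mul_mul₀ hmeas (Sum.inl i) (Sum.inr i) (Sum.inl j) (Sum.inr j)
      (by simpa using hij) (by simp) (by simp) (by simpa using hij)
  have hIC : ∀ i, ∀ j ∈ Finset.univ \ {i},
      Integrable (fun ω => X i ω * Y i ω * (X j ω * Y j ω)) P := fun i j hj => by
    have hij : i ≠ j := by
      rintro rfl
      simp at hj
    exact (hC i j hij).integrable_mul (hI1 i) (hI1 j)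
  have hEC : ∀ i, ∀ j ∈ Finset.univ \ {i},
      ∫ ω, X i ω * Y i ω * (X j ω * Y j ω) ∂P = 0 := fun i j hj => by
    have hij : i ≠ j := by
      rintro rfl
      simp at hj
    rw [(hC i j hij).integral_fun_mul_eq_mul_integral (hI1 i).aestronglyMeasurable
      (hI1 j).aestronglyMeasurable, hE1, zero_mul]
  rw [integral_add, integral_const_mul, integral_const_mul, integral_finsetSum _ (fun i _ => hI2 i),
    integral_finsetSum _ (fun i _ => integrable_finsetSum _ (hIC i))]
  · have h0 : ∀ i, ∫ ω, ∑ j ∈ Finset.univ \ {i}, X i ω * Y i ω * (X j ω * Y j ω) ∂P = 0 :=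
      fun i => by
        rw [integral_finsetSum _ (hIC i)]
        exact Finset.sum_eq_zero (hEC i)
    simp only [hE2, h0, Finset.sum_const_zero, mul_zero, add_zero]
    have hm : (m : ℝ) ≠ 0 := by
      have : m ≠ 0 := by omega
      exact_mod_cast this
    congr 1
    field_simp
  · exact (integrable_finsetSum _ (fun i _ => hI2 i)).const_mul _
  · exact (integrable_finsetSum _
      (fun i _ => integrable_finsetSum _ (hIC i))).const_mul _
end

section
/- Let n ≥ 2, 1 ≤ m < n, and let X_1,…,X_n be independent real random variables with X_i distributed as a centered Gaussian with variance σ_i² > 0. Then E[(n/m − 1)·∑_{i=1}ⁿ X_i⁴ + ((m−n)/(m(n−1)))·∑_{i≠j} X_i² X_j²] ≥ E[(2/m)·((n−m)/(n−1))·∑_{i≠j} X_i² X_j²], i.e. the expected variance of the pruning squared-norm estimator is at least the expected variance of the RPS squared-norm estimator, with equality if and only if σ_1 = σ_2 = … = σ_n. -/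
open Finset MeasureTheory ProbabilityTheory

lemma gauss_integrable_pow (v : NNReal) (k : ℕ) :
    Integrable (fun x : ℝ => x ^ k) (gaussianReal 0 v) :=
  integrable_pow_of_mem_interior_integrableExpSet (X := fun x => x) (by simp) k

lemma gauss_deriv_step (v : ℝ) (p q : ℝ → ℝ) (hp : ∀ t, HasDerivAt p (q t) t) :
    deriv (fun t => p t * Real.exp (v * t ^ 2 / 2)) =
      fun t => (q t + p t * (v * t)) * Real.exp (v * t ^ 2 / 2) := by
  ext t
  have h1 : HasDerivAt (fun t : ℝ => v * t ^ 2 / 2) (v * t) t := by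
    have := ((hasDerivAt_pow 2 t).const_mul v).div_const 2
    refine this.congr_deriv ?_
    push_cast
    ring
  have := ((hp t).mul h1.exp).deriv
  rw [show (fun t => p t * Real.exp (v * t ^ 2 / 2)) =
    p * (fun t => Real.exp (v * t ^ 2 / 2)) from rfl, this]
  ring

lemma gauss_iter (v : ℝ) :
    iteratedDeriv 2 (fun t : ℝ => Real.exp (v * t ^ 2 / 2)) =
      (fun t => (v + v ^ 2 * t ^ 2) * Real.exp (v * t ^ 2 / 2)) ∧
    iteratedDeriv 4 (fun t : ℝ => Real.exp (v * t ^ 2 / 2)) =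
      (fun t => (3 * v ^ 2 + 6 * v ^ 3 * t ^ 2 + v ^ 4 * t ^ 4) * Real.exp (v * t ^ 2 / 2)) := by
  have d1 : deriv (fun t : ℝ => Real.exp (v * t ^ 2 / 2)) =
      fun t => (v * t) * Real.exp (v * t ^ 2 / 2) := by
    have := gauss_deriv_step v (fun _ => 1) (fun _ => 0) (fun t => hasDerivAt_const t 1)
    simpa using this
  have d2 := gauss_deriv_step v (fun t => v * t) (fun _ => v)
    (fun t => by simpa using (hasDerivAt_id t).const_mul v)
  have e2 : iteratedDeriv 2 (fun t : ℝ => Real.exp (v * t ^ 2 / 2)) =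
      (fun t => (v + v ^ 2 * t ^ 2) * Real.exp (v * t ^ 2 / 2)) := by
    rw [iteratedDeriv_succ, iteratedDeriv_one, d1, d2]
    ext t; ring
  refine ⟨e2, ?_⟩
  have d3 := gauss_deriv_step v (fun t => v + v ^ 2 * t ^ 2) (fun t => v ^ 2 * (2 * t))
    (fun t => by simpa using (((hasDerivAt_id t).pow 2).const_mul (v ^ 2)).const_add v)
  have d4 := gauss_deriv_step v (fun t => v ^ 2 * (2 * t) + (v + v ^ 2 * t ^ 2) * (v * t))
    (fun t => 3 * v ^ 2 + 3 * v ^ 3 * t ^ 2)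
    (fun t => by
      have h1 := (hasDerivAt_id' t).const_mul (3 * v ^ 2)
      have h3 := (hasDerivAt_pow 3 t).const_mul (v ^ 3)
      have h := h1.add h3
      rw [show (fun t : ℝ => v ^ 2 * (2 * t) + (v + v ^ 2 * t ^ 2) * (v * t)) =
        (fun y => 3 * v ^ 2 * y) + fun y => v ^ 3 * y ^ 3 by
          ext s; simp only [Pi.add_apply]; ring]
      refine h.congr_deriv ?_
      push_cast
      ring)
  rw [iteratedDeriv_succ, iteratedDeriv_succ, e2, d3, d4]
  ext t; ring

lemma gauss_moment (v : NNReal) :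
    ∫ x, x ^ 2 ∂(gaussianReal 0 v) = v ∧ ∫ x, x ^ 4 ∂(gaussianReal 0 v) = 3 * (v : ℝ) ^ 2 := by
  have key : ∀ k : ℕ, ∫ x, x ^ k ∂(gaussianReal 0 v) =
      iteratedDeriv k (fun t : ℝ => Real.exp ((v : ℝ) * t ^ 2 / 2)) 0 := by
    intro k
    have h := iteratedDeriv_mgf_zero (X := fun x : ℝ => x) (μ := gaussianReal 0 v) (by simp) k
    rw [mgf_fun_id_gaussianReal] at h
    simpa using h.symm
  rw [key, key, (gauss_iter v).1, (gauss_iter v).2]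
  simp

lemma sum_identity {n : ℕ} (a : Fin n → ℝ) :
    2 * (((n : ℝ) - 1) * ∑ i, a i ^ 2 - ∑ i, ∑ j ∈ Finset.univ \ {i}, a i * a j) =
      ∑ i, ∑ j, (a i - a j) ^ 2 := by
  have h : ∀ i, ∑ j ∈ Finset.univ \ {i}, a i * a j = a i * ∑ j, a j - a i ^ 2 := by
    intro i
    rw [Finset.sum_sdiff_eq_sub (Finset.subset_univ _), Finset.mul_sum]
    simp [sq]
  simp_rw [h, sub_sq, Finset.sum_add_distrib, Finset.sum_sub_distrib, mul_assoc,
    ← Finset.mul_sum, ← Finset.sum_mul]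
  simp [← Finset.mul_sum]
  ring

/-- For `n ≥ 2`, `1 ≤ m < n` and independent `X_i ∼ N(0, σ_i²)` with `σ_i > 0`, the
expected variance of the pruning squared-norm estimator is at least that of the RPS
squared-norm estimator:
`E[(n/m − 1)·∑ X_i⁴ + ((m−n)/(m(n−1)))·∑_{i≠j} X_i² X_j²]
  ≥ E[(2/m)·((n−m)/(n−1))·∑_{i≠j} X_i² X_j²]`, with equality iff all `σ_i` are equal. -/
theorem expected_pruning_norm_variance_ge_rps {Ω : Type*} [MeasurableSpace Ω]
    (P : Measure Ω) [IsProbabilityMeasure P] (n m : ℕ) (hn : 2 ≤ n) (hm1 : 1 ≤ m)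
    (hmn : m < n) (X : Fin n → Ω → ℝ) (σ : Fin n → ℝ) (hσ : ∀ i, 0 < σ i)
    (hmeas : ∀ i, Measurable (X i))
    (hindep : iIndepFun X P)
    (hdist : ∀ i, Measure.map (X i) P = gaussianReal 0 (Real.toNNReal ((σ i) ^ 2))) :
    (let Eprune : ℝ := ∫ ω, (((n : ℝ) / (m : ℝ) - 1) * ∑ i, (X i ω) ^ 4
        + (((m : ℝ) - (n : ℝ)) / ((m : ℝ) * ((n : ℝ) - 1))) *
            ∑ i, ∑ j ∈ Finset.univ \ {i}, (X i ω) ^ 2 * (X j ω) ^ 2) ∂P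
     let Erps : ℝ := ∫ ω, (((2 : ℝ) / (m : ℝ)) * (((n : ℝ) - (m : ℝ)) / ((n : ℝ) - 1)) *
            ∑ i, ∑ j ∈ Finset.univ \ {i}, (X i ω) ^ 2 * (X j ω) ^ 2) ∂P
     Erps ≤ Eprune ∧ (Eprune = Erps ↔ ∀ i j, σ i = σ j)) := by
  have hint : ∀ i (k : ℕ), Integrable (fun ω => X i ω ^ k) P := by
    intro i k
    have h := gauss_integrable_pow (Real.toNNReal ((σ i) ^ 2)) k
    rw [← hdist i] at h
    exact h.comp_measurable (hmeas i)
  have hv : ∀ i, ((Real.toNNReal ((σ i) ^ 2) : NNReal) : ℝ) = σ i ^ 2 :=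
    fun i => Real.coe_toNNReal _ (sq_nonneg _)
  have hmom : ∀ i (k : ℕ), ∫ ω, X i ω ^ k ∂P =
      ∫ x, x ^ k ∂(gaussianReal 0 (Real.toNNReal ((σ i) ^ 2))) := by
    intro i k
    rw [← hdist i, integral_map (hmeas i).aemeasurable (by fun_prop)]
  have hm2 : ∀ i, ∫ ω, X i ω ^ 2 ∂P = σ i ^ 2 := by
    intro i
    rw [hmom, (gauss_moment _).1, hv]
  have hm4 : ∀ i, ∫ ω, X i ω ^ 4 ∂P = 3 * (σ i ^ 2) ^ 2 := by
    intro i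
    rw [hmom, (gauss_moment _).2, hv]
  have hind : ∀ i j, i ≠ j → IndepFun (fun ω => X i ω ^ 2) (fun ω => X j ω ^ 2) P := by
    intro i j hij
    exact (hindep.indepFun hij).comp (φ := fun x : ℝ => x ^ 2) (ψ := fun x : ℝ => x ^ 2)
      (by fun_prop) (by fun_prop)
  have hpi : ∀ i, ∀ j ∈ Finset.univ \ {i},
      Integrable (fun ω => X i ω ^ 2 * X j ω ^ 2) P := by
    intro i j hj
    have hij : i ≠ j := by
      simp at hj
      exact fun h => hj h.symm
    exact (hind i j hij).integrable_mul (hint i 2) (hint j 2)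
  have hpe : ∀ i, ∀ j ∈ Finset.univ \ {i},
      ∫ ω, X i ω ^ 2 * X j ω ^ 2 ∂P = σ i ^ 2 * σ j ^ 2 := by
    intro i j hj
    have hij : i ≠ j := by
      simp at hj
      exact fun h => hj h.symm
    rw [← hm2 i, ← hm2 j]
    exact (hind i j hij).integral_mul_eq_mul_integral (hint i 2).aestronglyMeasurable
      (hint j 2).aestronglyMeasurable
  have hI2 : Integrable (fun ω => ∑ i, ∑ j ∈ Finset.univ \ {i}, X i ω ^ 2 * X j ω ^ 2) P :=
    integrable_finsetSum _ fun i _ => integrable_finsetSum _ (hpi i)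
  have hI4 : Integrable (fun ω => ∑ i, X i ω ^ 4) P :=
    integrable_finsetSum _ fun i _ => hint i 4
  have hE2 : ∫ ω, (∑ i, ∑ j ∈ Finset.univ \ {i}, X i ω ^ 2 * X j ω ^ 2) ∂P =
      ∑ i, ∑ j ∈ Finset.univ \ {i}, σ i ^ 2 * σ j ^ 2 := by
    rw [integral_finsetSum _ fun i _ => integrable_finsetSum _ (hpi i)]
    refine Finset.sum_congr rfl fun i _ => ?_
    rw [integral_finsetSum _ (hpi i)]
    exact Finset.sum_congr rfl (hpe i)
  have hE4 : ∫ ω, (∑ i, X i ω ^ 4) ∂P = 3 * ∑ i, (σ i ^ 2) ^ 2 := by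
    rw [integral_finsetSum _ fun i _ => hint i 4, Finset.mul_sum]
    exact Finset.sum_congr rfl fun i _ => hm4 i
  intro Eprune Erps
  have hP : Eprune = ((n : ℝ) / (m : ℝ) - 1) * (3 * ∑ i, (σ i ^ 2) ^ 2)
        + (((m : ℝ) - (n : ℝ)) / ((m : ℝ) * ((n : ℝ) - 1))) *
            ∑ i, ∑ j ∈ Finset.univ \ {i}, σ i ^ 2 * σ j ^ 2 := by
    simp only [Eprune]
    rw [integral_add (hI4.const_mul _) (hI2.const_mul _), integral_const_mul,
      integral_const_mul, hE2, hE4]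
  have hR : Erps = ((2 : ℝ) / (m : ℝ)) * (((n : ℝ) - (m : ℝ)) / ((n : ℝ) - 1)) *
            ∑ i, ∑ j ∈ Finset.univ \ {i}, σ i ^ 2 * σ j ^ 2 := by
    simp only [Erps]
    rw [integral_const_mul, hE2]
  have hm0 : (0 : ℝ) < m := by exact_mod_cast hm1
  have hn1 : (0 : ℝ) < (n : ℝ) - 1 := by
    have : (2 : ℝ) ≤ n := by exact_mod_cast hn
    linarith
  have hnm : (0 : ℝ) < (n : ℝ) - m := by
    have : (m : ℝ) < n := by exact_mod_cast hmn
    linarith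
  have hc : (0 : ℝ) < 3 * ((n : ℝ) - m) / (2 * (m * ((n : ℝ) - 1))) := by positivity
  have hdiff : Eprune - Erps = 3 * ((n : ℝ) - m) / (2 * (m * ((n : ℝ) - 1))) *
      ∑ i, ∑ j, (σ i ^ 2 - σ j ^ 2) ^ 2 := by
    rw [hP, hR, ← sum_identity (fun i => σ i ^ 2)]
    have h1 := hm0.ne'
    have h2 := hn1.ne'
    field_simp
    ring
  have hnn : 0 ≤ ∑ i, ∑ j, (σ i ^ 2 - σ j ^ 2) ^ 2 :=
    Finset.sum_nonneg fun i _ => Finset.sum_nonneg fun j _ => sq_nonneg _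
  refine ⟨by have := mul_nonneg hc.le hnn; linarith, ?_⟩
  rw [← sub_eq_zero, hdiff, mul_eq_zero, or_iff_right hc.ne',
    Finset.sum_eq_zero_iff_of_nonneg fun i _ => Finset.sum_nonneg fun j _ => sq_nonneg _]
  constructor
  · intro h i j
    have h1 := (Finset.sum_eq_zero_iff_of_nonneg fun j _ => sq_nonneg _).1
      (h i (Finset.mem_univ i)) j (Finset.mem_univ j)
    have h2 : σ i ^ 2 = σ j ^ 2 := by
      have := pow_eq_zero_iff (two_ne_zero) |>.1 h1
      linarith
    exact (pow_left_inj₀ (hσ i).le (hσ j).le two_ne_zero).1 h2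
  · intro h i _
    refine Finset.sum_eq_zero fun j _ => ?_
    rw [h i j]
    ring
end

section
/- Stability of RPS with gradient scaling (Theorem 2): let F : ℝⁿ → ℝ be differentiable with L-Lipschitz gradient (Euclidean norm), let h : {1,…,n} → {1,…,m} be surjective, g : {1,…,n} → {−1,+1}, λ_1,…,λ_n > 0, let A : ℝ^m → ℝⁿ be the linear map (Aψ)_i = g(i)·λ_i·ψ_{h(i)}, and define the gradient scaler Γ(j) = 1/(∑_{i : h(i)=j} λ_i²) for j = 1,…,m. Then for any 0 < η ≤ 2/L and any ψ ∈ ℝ^m, the scaled gradient-descent step in parameter space, θ' = θ − η·A(Γ ⊙ Aᵀ∇F(θ)) with θ = Aψ (where ⊙ denotes coordinatewise multiplication by Γ), satisfies F(θ') ≤ F(θ); thus the stability range of the learning rate is maintained at (0, 2/L) under compression. -/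
open Finset

theorem descent_aux {n : ℕ} (F : EuclideanSpace ℝ (Fin n) → ℝ) (L : ℝ) (hL : 0 < L)
    (hdiff : Differentiable ℝ F) (hlip : LipschitzWith (Real.toNNReal L) (gradient F))
    (x u : EuclideanSpace ℝ (Fin n)) :
    F (x + u) ≤ F x + inner ℝ (gradient F x) u + L / 2 * ‖u‖ ^ 2 := by
  let φ : ℝ → ℝ := fun t => F (x + t • u) - t * inner ℝ (gradient F x) u - L / 2 * ‖u‖ ^ 2 * t ^ 2
  have hφ : ∀ t : ℝ, HasDerivAt φ (inner ℝ (gradient F (x + t • u)) u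
      - inner ℝ (gradient F x) u - L / 2 * ‖u‖ ^ 2 * (2 * t)) t := by
    intro t
    have h1 : HasDerivAt (fun t : ℝ => x + t • u) u t := by
      simpa using ((hasDerivAt_id t).smul_const u).const_add x
    have h2 := (hdiff (x + t • u)).hasGradientAt.hasFDerivAt.comp_hasDerivAt t h1
    have h3 : HasDerivAt (fun t : ℝ => t * inner ℝ (gradient F x) u)
        (inner ℝ (gradient F x) u) t := by
      simpa using (hasDerivAt_id t).mul_const (inner ℝ (gradient F x) u)
    have h4 : HasDerivAt (fun t : ℝ => L / 2 * ‖u‖ ^ 2 * t ^ 2) (L / 2 * ‖u‖ ^ 2 * (2 * t)) t := by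
      simpa using (hasDerivAt_pow 2 t).const_mul (L / 2 * ‖u‖ ^ 2)
    have h5 : HasDerivAt (fun t : ℝ => F (x + t • u)) (inner ℝ (gradient F (x + t • u)) u) t := by
      exact h2
    exact (h5.sub h3).sub h4
  have hanti : AntitoneOn φ (Set.Icc 0 1) := by
    apply antitoneOn_of_deriv_nonpos (convex_Icc 0 1)
    · exact fun t _ => (hφ t).continuousAt.continuousWithinAt
    · exact fun t _ => (hφ t).differentiableAt.differentiableWithinAt
    · intro t ht
      rw [interior_Icc] at ht
      rw [(hφ t).deriv, ← inner_sub_left]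
      have h1 := real_inner_le_norm (gradient F (x + t • u) - gradient F x) u
      have h2 := hlip.norm_sub_le (x + t • u) x
      rw [add_sub_cancel_left, norm_smul, Real.norm_of_nonneg ht.1.le,
        Real.coe_toNNReal L hL.le] at h2
      have h3 := mul_le_mul_of_nonneg_right h2 (norm_nonneg u)
      nlinarith
  have := hanti (Set.left_mem_Icc.2 zero_le_one) (Set.right_mem_Icc.2 zero_le_one) zero_le_one
  simp only [φ, one_smul, zero_smul, add_zero] at this
  linarith

/-- Stability of RPS with gradient scaling: with `F : ℝⁿ → ℝ` differentiable with
`L`-Lipschitz gradient, `h : {1,…,n} → {1,…,m}` surjective, signs `g(i) ∈ {−1,+1}`,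
scales `λ_i > 0`, `A : ℝᵐ → ℝⁿ` the linear map `(Aψ)_i = g(i)·λ_i·ψ_{h(i)}`, and the
gradient scaler `Γ(j) = 1/∑_{i : h(i)=j} λ_i²`, for any `0 < η ≤ 2/L` the scaled
gradient-descent step `θ' = θ − η·A(Γ ⊙ Aᵀ∇F(θ))` with `θ = Aψ` satisfies
`F(θ') ≤ F(θ)`: the stability range `(0, 2/L)` of the learning rate is maintained. -/
theorem rps_gradient_scaling_stable (n m : ℕ)
    (F : EuclideanSpace ℝ (Fin n) → ℝ) (L : ℝ) (hL : 0 < L)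
    (hdiff : Differentiable ℝ F) (hlip : LipschitzWith (Real.toNNReal L) (gradient F))
    (h : Fin n → Fin m) (hsurj : Function.Surjective h)
    (g : Fin n → ℝ) (hg : ∀ i, g i = 1 ∨ g i = -1)
    (lam : Fin n → ℝ) (hlam : ∀ i, 0 < lam i)
    (A : EuclideanSpace ℝ (Fin m) →L[ℝ] EuclideanSpace ℝ (Fin n))
    (hA : ∀ ψ i, A ψ i = g i * lam i * ψ (h i))
    (Γ : Fin m → ℝ)
    (hΓ : ∀ j, Γ j = 1 / ∑ i ∈ Finset.univ.filter (fun i => h i = j), (lam i) ^ 2)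
    (η : ℝ) (hη0 : 0 < η) (hη : η ≤ 2 / L)
    (ψ : EuclideanSpace ℝ (Fin m)) (θ : EuclideanSpace ℝ (Fin n)) (hθ : θ = A ψ) :
    F (θ - η • A ((WithLp.toLp 2 fun j => Γ j * (ContinuousLinearMap.adjoint A) (gradient F θ) j :
        EuclideanSpace ℝ (Fin m)))) ≤ F θ := by
  have hpos : ∀ j, 0 < ∑ i ∈ Finset.univ.filter (fun i => h i = j), (lam i) ^ 2 := by
    intro j
    obtain ⟨i, hi⟩ := hsurj j
    apply Finset.sum_pos
    · intro i _
      exact pow_pos (hlam i) 2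
    · exact ⟨i, by simp [hi]⟩
  set v := gradient F θ with hv
  set b := (ContinuousLinearMap.adjoint A) v with hb
  set s : EuclideanSpace ℝ (Fin m) := WithLp.toLp 2 fun j => Γ j * b j with hs
  have hsj : ∀ j, s j = Γ j * b j := fun j => rfl
  have e1 : inner ℝ v (A s) = ∑ j, Γ j * b j ^ 2 := by
    rw [← ContinuousLinearMap.adjoint_inner_left, ← hb, PiLp.inner_apply]
    refine Finset.sum_congr rfl fun j _ => ?_
    simp only [hsj, RCLike.inner_apply, conj_trivial]
    ring
  have e2 : ‖A s‖ ^ 2 = ∑ j, Γ j * b j ^ 2 := by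
    rw [EuclideanSpace.real_norm_sq_eq, ← Finset.sum_fiberwise Finset.univ h]
    refine Finset.sum_congr rfl fun j _ => ?_
    have : ∀ i ∈ Finset.univ.filter (fun i => h i = j),
        (A s i) ^ 2 = lam i ^ 2 * (Γ j * b j) ^ 2 := by
      intro i hi
      have hij : h i = j := by simpa using hi
      have hg2 : g i ^ 2 = 1 := by rcases hg i with h | h <;> simp [h]
      rw [hA, hij, hsj, mul_pow, mul_pow, hg2, one_mul]
    rw [Finset.sum_congr rfl this, ← Finset.sum_mul, hΓ j]
    have := (hpos j).ne'
    field_simp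
  have hd := descent_aux F L hL hdiff hlip θ (-(η • A s))
  rw [← sub_eq_add_neg, inner_neg_right, inner_smul_right, norm_neg, norm_smul, mul_pow,
    Real.norm_of_nonneg hη0.le, ← hv, e1, ← e2] at hd
  have h1 : η * L ≤ 2 := (le_div_iff₀ hL).1 hη
  have h2 : 0 ≤ η * ‖A s‖ ^ 2 := by positivity
  nlinarith [mul_nonneg h2 (sub_nonneg.2 h1)]
end
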